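/- Let (Q,I) be a gentle bound quiver with marked ribbon graph (G,≤) = △(Q,I) and Cartan matrix C; set n := |Q0| = |E(G)| and m := |V(G)|. Let Ĵ be the E(G) × V(G) integer matrix whose column at a vertex α is the incidence vector inc(Ǒ_α) of the unique anti-walk Ǒ_α with target vertex α, and let ξ be the permutation of V(G) sending α to the source vertex of Ǒ_α. Then: (i) I_m − Ĵ^tr·C·Ĵ is the signed permutation matrix sending the basis vector e_α to (−1)^{ℓ(Ǒ_α)} e_{ξ(α)} for every vertex α; (ii) the characteristic polynomial of the n × n matrix I_n − Ĵ·Ĵ^tr·C^tr equals (z − 1)^{n − m} · ∏_O ( z^{|O|} − ∏_{α ∈ O} (−1)^{ℓ(Ǒ_α)} ), where the product runs over the orbits O of the permutation ξ on V(G). Since I_n − ĴĴ^trC^tr is the matrix of the Coxeter transformation of the gentle algebra A = kQ/I in the basis of indecomposable projectives, (ii) computes the Coxeter polynomial ψ_A(z); rewritten via the faces of (G,≤) it yields the formula ψ_A(z) = (z−1)^{|Q1|−|Q0|} ∏_{n′>0, m′≥0} (z^{n′} − (−1)^{n′+m′})^{φ_A(n′,m′)}, where φ_A is the Avella-Alaminos–Geiss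 invariant of A. -/

import Mathlib

set_option autoImplicit false

attribute [local instance] Classical.propDecidable

/-- A bound-quiver datum: a quiver (source and target maps on a set of arrows) together
with a set of length-two relations; `rel a b` means that the length-two path `ab`
(composable, i.e. `src a = tgt b`; paths are written from right to left) lies in the
generating set of relations of the ideal `I`. -/
structure BQuiv (V A : Type) where
  src : A → V
  tgt : A → V
  rel : A → A → Prop

namespace BQuiv

variable {V A : Type}

/-- `l` is (the list of arrows of) a path of the quiver, written from right to left:
`l = [a₁, a₂, …, a_ℓ]` represents `a₁a₂⋯a_ℓ` and we ask `src aₜ = tgt aₜ₊₁`. -/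
def PathChain (Q : BQuiv V A) (l : List A) : Prop :=
  l.Chain' (fun a b => Q.src a = Q.tgt b)

/-- The degree of a vertex: the number of outgoing plus the number of incoming arrows. -/
noncomputable def deg (Q : BQuiv V A) (v : V) : ℕ :=
  Nat.card {a : A // Q.src a = v} + Nat.card {a : A // Q.tgt a = v}

/-- `(Q, I)` is a gentle bound quiver. -/
structure IsGentle (Q : BQuiv V A) : Prop where
  /-- relations are composable length-two paths -/
  rel_comp : ∀ a b, Q.rel a b → Q.src a = Q.tgt b
  /-- at most two outgoing arrows at every vertex -/
  out_le : ∀ v, Nat.card {a : A // Q.src a = v} ≤ 2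
  /-- at most two incoming arrows at every vertex -/
  in_le : ∀ v, Nat.card {a : A // Q.tgt a = v} ≤ 2
  /-- for every arrow `b` there is at most one arrow `a` with `ab ∉ I` -/
  unique_nonrel_post : ∀ b a a', Q.src a = Q.tgt b → Q.src a' = Q.tgt b →
    ¬ Q.rel a b → ¬ Q.rel a' b → a = a'
  /-- for every arrow `b` there is at most one arrow `c` with `bc ∉ I` -/
  unique_nonrel_pre : ∀ b c c', Q.src b = Q.tgt c → Q.src b = Q.tgt c' →
    ¬ Q.rel b c → ¬ Q.rel b c' → c = c'
  /-- for every arrow `b` there is at most one arrow `a` with `ab ∈ I` -/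
  unique_rel_post : ∀ b a a', Q.rel a b → Q.rel a' b → a = a'
  /-- for every arrow `b` there is at most one arrow `c` with `bc ∈ I` -/
  unique_rel_pre : ∀ b c c', Q.rel b c → Q.rel b c' → c = c'
  /-- admissibility: there is `m ≥ 2` such that every path of length `m` contains a
  length-two subpath lying in the relation set -/
  admissible : ∃ m, 2 ≤ m ∧ ∀ l : List A, l.length = m → Q.PathChain l →
    ¬ l.Chain' (fun a b => ¬ Q.rel a b)
  /-- the quiver is connected -/
  connected : ∀ u v : V, Relation.ReflTransGen
    (fun x y => ∃ a, (Q.src a = x ∧ Q.tgt a = y) ∨ (Q.src a = y ∧ Q.tgt a = x)) u v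
  /-- the quiver has at least one arrow -/
  has_arrow : Nonempty A

/-- A path of the quiver `Q`, with a base (source) vertex so that trivial paths make
sense.  The arrows are written from right to left. -/
structure Path (Q : BQuiv V A) where
  base : V
  arrows : List A
  chain : arrows.Chain' (fun a b => Q.src a = Q.tgt b)
  base_eq : ∀ a, arrows.getLast? = some a → Q.src a = base

variable {Q : BQuiv V A}

/-- The source vertex of a path. -/
def Path.srcV (p : Path Q) : V := p.base

/-- The target vertex of a path. -/
def Path.tgtV (p : Path Q) : V := p.arrows.head?.elim p.base Q.tgt

/-- The vertex of a path sitting between its first `n` arrows and the rest: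
the center of the corresponding split of the path. -/
def Path.vertexAt (p : Path Q) (n : ℕ) : V :=
  (p.arrows.drop n).head?.elim p.base Q.tgt

/-- A path is permitted if none of its length-two subpaths is a relation. -/
def Path.Permitted (p : Path Q) : Prop :=
  p.arrows.Chain' (fun a b => ¬ Q.rel a b)

/-- A path is forbidden if each of its length-two subpaths is a relation. -/
def Path.Forbidden (p : Path Q) : Prop :=
  p.arrows.Chain' (fun a b => Q.rel a b)

/-- Permitted threads: maximal non-trivial permitted paths, together with the trivial
paths `e_i` at vertices `i` with `deg i = 1`, or `deg i = 2` with the two arrows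
`α, β` at `i` satisfying `src α = tgt β = i` and `αβ ∉ I`. -/
def IsPermThread (Q : BQuiv V A) (p : Path Q) : Prop :=
  (p.arrows ≠ [] ∧ p.Permitted ∧
    (∀ a b, p.arrows.head? = some b → Q.src a = Q.tgt b → Q.rel a b) ∧
    (∀ a c, p.arrows.getLast? = some a → Q.src a = Q.tgt c → Q.rel a c)) ∨
  (p.arrows = [] ∧ (Q.deg p.base = 1 ∨ (Q.deg p.base = 2 ∧
    ∃ α β, Q.src α = p.base ∧ Q.tgt β = p.base ∧ ¬ Q.rel α β)))

/-- Forbidden threads: maximal non-trivial forbidden paths, together with the trivial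
paths `e_i` at vertices `i` with `deg i = 1`, or `deg i = 2` with the two arrows
`α, β` at `i` satisfying `src α = tgt β = i` and `αβ ∈ I`. -/
def IsForbThread (Q : BQuiv V A) (p : Path Q) : Prop :=
  (p.arrows ≠ [] ∧ p.Forbidden ∧
    (∀ a b, p.arrows.head? = some b → Q.src a = Q.tgt b → ¬ Q.rel a b) ∧
    (∀ a c, p.arrows.getLast? = some a → Q.src a = Q.tgt c → ¬ Q.rel a c)) ∨
  (p.arrows = [] ∧ (Q.deg p.base = 1 ∨ (Q.deg p.base = 2 ∧
    ∃ α β, Q.src α = p.base ∧ Q.tgt β = p.base ∧ Q.rel α β)))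

end BQuiv

namespace BQuiv

variable {V A : Type}

/-- The type of permitted threads of `(Q, I)`: the vertices of the associated marked
ribbon graph `△(Q, I)`. -/
def PThread (Q : BQuiv V A) : Type := {p : Path Q // IsPermThread Q p}

/-- The type of split permitted threads of `(Q, I)`: a permitted thread together with a
cut position.  These are the half-edges of the associated marked ribbon graph
`△(Q, I)`. -/
def PSplit (Q : BQuiv V A) : Type := {x : PThread Q × ℕ // x.2 ≤ x.1.1.arrows.length}

/-- The thread (vertex of `△(Q, I)`) over which a split permitted thread lies. -/
def PSplit.thread {Q : BQuiv V A} (x : PSplit Q) : PThread Q := x.1.1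

/-- The cut position of a split permitted thread. -/
def PSplit.idx {Q : BQuiv V A} (x : PSplit Q) : ℕ := x.1.2

/-- The center of a split permitted thread `(η″, η′)`: the vertex `s(η″) = t(η′)`.
The centers realize the bijection between the edges of `△(Q, I)` and the vertices
of `Q`. -/
def PSplit.center {Q : BQuiv V A} (x : PSplit Q) : V :=
  x.1.1.1.vertexAt x.1.2

end BQuiv

namespace BQuiv

variable {V A : Type}

/-- The Cartan matrix of the gentle algebra `kQ/I`: its `(i, j)` entry is the number of
permitted paths with source `j` and target `i` (which equals `dim_k Hom(P_i, P_j)`). -/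
noncomputable def cartan (Q : BQuiv V A) : Matrix V V ℤ :=
  fun i j => (Nat.card {p : Path Q // p.Permitted ∧ p.base = j ∧ p.tgtV = i} : ℤ)

/-- The (edge-vertex) incidence matrix of the marked ribbon graph `△(Q, I)`, with edges
identified with `Q₀` (via centers) and vertices with the permitted threads (transported
along a bijection `e` with a finite index type `W`): the entry at `(i, w)` is the number
of half-edges of the edge `i` incident to the vertex `e w`, i.e. the number of split
permitted threads with center `i` lying over the thread `e w`. -/
noncomputable def dInc (Q : BQuiv V A) {W : Type} (e : W ≃ PThread Q) : Matrix V W ℤ :=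
  fun i w => (Nat.card {x : PSplit Q // x.center = i ∧ x.thread = e w} : ℤ)

end BQuiv

namespace BQuiv

variable {V A : Type}

/-- An ordered edge of the marked ribbon graph `△(Q, I)`: a pair `(h′, h″)` of
half-edges with `h″ = ι h′`, i.e. a pair of distinct split permitted threads with the
same center.  The first component is the target half-edge, the second the source
half-edge. -/
def DOE (Q : BQuiv V A) : Type :=
  {p : PSplit Q × PSplit Q // p.1 ≠ p.2 ∧ p.1.center = p.2.center}

/-- The target half-edge of an ordered edge of `△(Q, I)`. -/
def DOE.tS {Q : BQuiv V A} (i : DOE Q) : PSplit Q := i.1.1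

/-- The source half-edge of an ordered edge of `△(Q, I)`. -/
def DOE.sS {Q : BQuiv V A} (i : DOE Q) : PSplit Q := i.1.2

/-- The target vertex (a permitted thread) of an ordered edge of `△(Q, I)`. -/
def DOE.tvx {Q : BQuiv V A} (i : DOE Q) : PThread Q := i.1.1.thread

/-- The source vertex (a permitted thread) of an ordered edge of `△(Q, I)`. -/
def DOE.svx {Q : BQuiv V A} (i : DOE Q) : PThread Q := i.1.2.thread

/-- The underlying (unordered) edge of an ordered edge of `△(Q, I)`, identified with a
vertex of `Q` via centers. -/
def DOE.ctr {Q : BQuiv V A} (i : DOE Q) : V := i.1.1.center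

/-- The inverse of an ordered edge of `△(Q, I)`. -/
def DOE.inv {Q : BQuiv V A} (i : DOE Q) : DOE Q :=
  ⟨(i.1.2, i.1.1), ⟨Ne.symm i.2.1, i.2.2.symm⟩⟩

/-- `l` is (the list of ordered edges of) a walk of `△(Q, I)`, written from right to
left. -/
def IsDWalk (Q : BQuiv V A) (l : List (DOE Q)) : Prop :=
  l.Chain' (fun i j => DOE.svx i = DOE.tvx j)

/-- The walk `l` of `△(Q, I)` is reduced. -/
def IsDRed (Q : BQuiv V A) (l : List (DOE Q)) : Prop :=
  l.Chain' (fun i j => j ≠ DOE.inv i)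

/-- `y` is the direct successor of `x` in the half-edge order of `△(Q, I)`: `x` and `y`
lie over the same thread and `y` covers `x` (the half-edge `h^α_t` corresponds to the
split `(α, t)` and `h^α_t < h^α_{t-1}` is a covering). -/
def DSucc {Q : BQuiv V A} (x y : PSplit Q) : Prop :=
  x.thread = y.thread ∧ x.idx = y.idx + 1

/-- Anti-walks of `△(Q, I)`: non-trivial walks `i₁⋯i_{L+1}` in which the source
half-edge of `iₜ` is the direct successor of the target half-edge of `iₜ₊₁` with
respect to `≤`, maximal with this property. -/
def IsAntiDW (Q : BQuiv V A) (l : List (DOE Q)) : Prop :=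
  l ≠ [] ∧ IsDWalk Q l ∧
  l.Chain' (fun i j => DSucc (DOE.tS j) (DOE.sS i)) ∧
  (∀ i, l.head? = some i → ∀ i0 : DOE Q, ¬ DSucc (DOE.tS i) (DOE.sS i0)) ∧
  (∀ i, l.getLast? = some i → ∀ i2 : DOE Q, ¬ DSucc (DOE.tS i2) (DOE.sS i)) 

/-- The incidence vector of a walk `w = i₁⋯i_{L+1}` of `△(Q, I)`:
`inc(w) = Σₜ (-1)ᵗ e_{ē(i_{t+1})} ∈ ℤ^{Q₀}`. -/
noncomputable def incVec {Q : BQuiv V A} : List (DOE Q) → V → ℤ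
  | [] => fun _ => 0
  | i :: l => fun v => (if DOE.ctr i = v then 1 else 0) - incVec l v

end BQuiv

open BQuiv Polynomial
open scoped Matrix

/-!
Let `D` be the edge-vertex incidence matrix of the ribbon graph and `Φ` the signed permutation
matrix `e_α ↦ (-1)^ℓ(Ǒ_α) e_{ξ α}`. Every vertex `v` of `Q` is the center of exactly two splits, so
both `Dᵀ e_v` and `C e_v` are sums of two terms, one for each of these splits:
* `Dᵀ e_v` adds the basis vectors of the threads that are split;
* `C e_v` adds the basis vectors of the targets of the permitted paths starting at `v`, which are
  the vertices at or before the cut in either thread; the trivial path is attributed to one of them.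

Along an anti-walk the second term of an edge is the first term of the next one, so the alternating
sum that defines an incidence vector telescopes. This gives `Dᵀ J = 1 - Φ` and `C J = -D Φ`, hence
`Jᵀ C J = -(1 - Φ)ᵀ Φ = 1 - Φ` because `Φᵀ Φ = 1`. The characteristic polynomial then follows from
Sylvester's identity `det (1 - M N) = det (1 - N M)` and the cycle decomposition of `ξ`.
-/

section InextensibleChain

variable {α : Type*} {R : α → α → Prop}

/-- A list related in succession by `R` that can be prolonged at neither end. -/
structure IsInextensibleChain (R : α → α → Prop) (l : List α) : Prop where
  isChain : l.IsChain R
  not_rel_head : ∀ a b, l.head? = some b → ¬R a b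
  not_getLast_rel : ∀ a b, l.getLast? = some a → ¬R a b

namespace IsInextensibleChain

variable {l l' : List α} {a b : α} {k k' : ℕ}

theorem exists_getElem?_succ (hl : IsInextensibleChain R l) (ha : l[k]? = some a) (hab : R a b) :
    ∃ c, l[k + 1]? = some c ∧ R a c := by
  obtain ⟨hk, rfl⟩ := List.getElem?_eq_some_iff.1 ha
  have hk1 : k + 1 < l.length := by
    by_contra hlast
    refine hl.not_getLast_rel l[k] b ?_ hab
    rw [List.getLast?_eq_getElem?, show l.length - 1 = k by lia, List.getElem?_eq_getElem hk]
  exact ⟨l[k + 1], List.getElem?_eq_getElem hk1, List.isChain_iff_getElem.1 hl.isChain k hk1⟩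

theorem exists_getElem?_pred (hl : IsInextensibleChain R l) (hb : l[k]? = some b) (hab : R a b) :
    ∃ j c, k = j + 1 ∧ l[j]? = some c ∧ R c b := by
  obtain ⟨hk, rfl⟩ := List.getElem?_eq_some_iff.1 hb
  cases k with
  | zero => exact absurd hab (hl.not_rel_head a _ (by rw [List.head?_eq_getElem?, hb]))
  | succ j =>
    exact ⟨j, l[j], rfl, List.getElem?_eq_getElem _, List.isChain_iff_getElem.1 hl.isChain j hk⟩

theorem rel_of_getElem? (hl : IsInextensibleChain R l) (ha : l[k]? = some a)
    (hb : l[k + 1]? = some b) : R a b := by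
  obtain ⟨hk, rfl⟩ := List.getElem?_eq_some_iff.1 ha
  obtain ⟨hk1, rfl⟩ := List.getElem?_eq_some_iff.1 hb
  exact List.isChain_iff_getElem.1 hl.isChain k hk1

theorem getElem?_succ_eq_some_iff (hR : Relator.RightUnique R) (hl : IsInextensibleChain R l)
    (ha : l[k]? = some a) : l[k + 1]? = some b ↔ R a b := by
  refine ⟨hl.rel_of_getElem? ha, fun hab => ?_⟩
  obtain ⟨c, hc, hac⟩ := hl.exists_getElem?_succ ha hab
  rwa [hR hab hac]

theorem idx_eq_and_head?_eq (hR : Relator.LeftUnique R) (hl : IsInextensibleChain R l)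
    (hl' : IsInextensibleChain R l') (ha : l[k]? = some a) (ha' : l'[k']? = some a) :
    k = k' ∧ l.head? = l'.head? := by
  induction k generalizing k' a with
  | zero =>
    cases k' with
    | zero => simp only [List.head?_eq_getElem?, ha, ha', and_self]
    | succ j' =>
      obtain ⟨hj', -⟩ := List.getElem?_eq_some_iff.1 ha'
      have hpred := hl'.rel_of_getElem? (List.getElem?_eq_getElem (by lia)) ha'
      obtain ⟨j, c, h, -⟩ := hl.exists_getElem?_pred ha hpred
      exact absurd h (by lia)
  | succ j ih =>
    obtain ⟨hj, -⟩ := List.getElem?_eq_some_iff.1 ha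
    have hb := List.getElem?_eq_getElem (l := l) (i := j) (by lia)
    have hba := hl.rel_of_getElem? hb ha
    obtain ⟨j', c, rfl, hc, hca⟩ := hl'.exists_getElem?_pred ha' hba
    obtain ⟨rfl, hhead⟩ := ih hb (by rwa [hR hba hca])
    exact ⟨rfl, hhead⟩

theorem isPrefix_drop (hR : Relator.RightUnique R) (hl' : IsInextensibleChain R l')
    (hl : l.IsChain R) (hhead : l.head? = l'[k]?) : l <+: l'.drop k := by
  suffices ∀ n a, l[n]? = some a → l'[k + n]? = some a by
    simp only [List.prefix_iff_getElem?, List.getElem?_drop]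
    exact fun n hn => this n _ (List.getElem?_eq_getElem hn)
  intro n
  induction n with
  | zero => exact fun a ha => by rwa [Nat.add_zero, ← hhead, List.head?_eq_getElem?]
  | succ n ih =>
    intro a ha
    obtain ⟨hn, rfl⟩ := List.getElem?_eq_some_iff.1 ha
    exact (hl'.getElem?_succ_eq_some_iff hR (ih _ (List.getElem?_eq_getElem (by lia)))).2
      (List.isChain_iff_getElem.1 hl n hn)

theorem eq_of_getElem?_eq (hR : Relator.BiUnique R) (hl : IsInextensibleChain R l)
    (hl' : IsInextensibleChain R l') (ha : l[k]? = some a) (ha' : l'[k']? = some a) :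
    l = l' := by
  have hhead := (hl.idx_eq_and_head?_eq hR.1 hl' ha ha').2
  have hle₁ : l <+: l' :=
    hl'.isPrefix_drop (k := 0) hR.2 hl.isChain (hhead.trans List.head?_eq_getElem?)
  have hle₂ : l' <+: l :=
    hl.isPrefix_drop (k := 0) hR.2 hl'.isChain (hhead.symm.trans List.head?_eq_getElem?)
  exact hle₁.eq_of_length_le hle₂.length_le

end IsInextensibleChain

theorem exists_isInextensibleChain_mem {m : ℕ} (hm : ∀ l : List α, l.IsChain R → l.length ≤ m)
    (a : α) : ∃ l, IsInextensibleChain R l ∧ a ∈ l := by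
  obtain ⟨l, ⟨hl, ha⟩, hmax⟩ := (measure fun l : List α => m - l.length).wf.has_min
    {l | l.IsChain R ∧ a ∈ l} ⟨[a], List.isChain_singleton a, List.mem_singleton_self a⟩
  have longest : ∀ l' : List α, l'.IsChain R → a ∈ l' → l'.length ≤ l.length := by
    intro l' hl' ha'
    have h₁ := hm l' hl'
    have h₂ : ¬m - l'.length < m - l.length := hmax l' ⟨hl', ha'⟩
    lia
  refine ⟨l, ⟨hl, fun b c hc hbc => ?_, fun b c hb hbc => ?_⟩, ha⟩
  · have chain : (b :: l).IsChain R := hl.cons fun d hd => Option.mem_unique hc hd ▸ hbc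
    have := longest _ chain (List.mem_cons_of_mem b ha)
    simp at this
  · have chain : (l ++ [c]).IsChain R := hl.append (List.isChain_singleton c)
      fun d hd x hx => Option.mem_unique hb hd ▸ Option.some_inj.1 hx ▸ hbc
    have := longest _ chain (List.mem_append_left _ ha)
    simp at this

end InextensibleChain

/-! ### Monomial matrices -/

/-- Once `τ` moves one point, it is forced to follow `σ` along the whole cycle. -/
theorem eq_one_or_eq_of_isCycleOn {B : Type*} [Finite B] {σ τ : Equiv.Perm B}
    (hσ : σ.IsCycleOn Set.univ) (hτ : ∀ b, τ b = b ∨ τ b = σ b) : τ = 1 ∨ τ = σ := by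
  by_contra! h
  obtain ⟨a, ha⟩ : ∃ a, τ a ≠ a := not_forall.1 fun H => h.1 (Equiv.ext H)
  have moved : ∀ n : ℕ, τ ((σ ^ n) a) ≠ (σ ^ n) a := by
    intro n
    induction n with
    | zero => exact ha
    | succ n ih =>
      have hn : τ ((σ ^ n) a) = (σ ^ (n + 1)) a := by
        rw [pow_succ', Equiv.Perm.mul_apply]
        exact (hτ _).resolve_left ih
      rw [← hn, τ.injective.ne_iff]
      exact ih
  refine h.2 (Equiv.ext fun b => ?_)
  obtain ⟨n, rfl⟩ := hσ.exists_pow_eq' Set.finite_univ (Set.mem_univ a) (Set.mem_univ b)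
  exact (hτ _).resolve_left (moved n)

section MonomialMatrix

variable {B V R : Type*} [DecidableEq B] [CommRing R]

/-- The monomial matrix (weighted permutation matrix) sending the basis vector `e_α` to
`s α • e_{σ α}`. -/
def monomialMatrix (σ : Equiv.Perm B) (s : B → R) : Matrix B B R :=
  Matrix.of fun β α => if β = σ α then s α else 0

theorem monomialMatrix_apply (σ : Equiv.Perm B) (s : B → R) (β α : B) :
    monomialMatrix σ s β α = if β = σ α then s α else 0 := rfl

variable [Fintype B]

theorem mul_monomialMatrix_apply (M : Matrix V B R) (σ : Equiv.Perm B) (s : B → R) (v : V) (α : B) :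
    (M * monomialMatrix σ s) v α = M v (σ α) * s α := by
  simp [Matrix.mul_apply, monomialMatrix_apply]

theorem transpose_monomialMatrix_mul (σ : Equiv.Perm B) (s t : B → R) :
    (monomialMatrix σ s)ᵀ * monomialMatrix σ t = Matrix.diagonal fun b => s b * t b := by
  ext β α
  rcases eq_or_ne β α with rfl | h
  · simp [Matrix.mul_apply, monomialMatrix_apply]
  · simp [Matrix.mul_apply, monomialMatrix_apply, h, h.symm]

theorem charmatrix_monomialMatrix_apply (σ : Equiv.Perm B) (s : B → R) (β α : B) :
    (monomialMatrix σ s).charmatrix β α =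
      (if β = α then X else 0) - (if β = σ α then C (s α) else 0) := by
  rw [Matrix.charmatrix_apply, Matrix.diagonal_apply, monomialMatrix_apply, apply_ite C, C_0]

theorem charpoly_monomialMatrix_of_isCycleOn [Nonempty B] {σ : Equiv.Perm B}
    (hσ : σ.IsCycleOn Set.univ) (s : B → R) :
    (monomialMatrix σ s).charpoly = X ^ Fintype.card B - C (∏ b, s b) := by
  rcases subsingleton_or_nontrivial B with _ | _
  · obtain ⟨_⟩ := nonempty_unique B
    rw [Matrix.charpoly, Matrix.det_unique, charmatrix_monomialMatrix_apply]
    simp [Subsingleton.elim (σ default) default]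
  have hne : ∀ b, σ b ≠ b := fun b => hσ.apply_ne Set.nontrivial_univ (Set.mem_univ b)
  have hcycle : σ.IsCycle := Equiv.Perm.isCycle_iff_exists_isCycleOn.2
    ⟨Set.univ, Set.nontrivial_univ, hσ, fun _ _ => Set.mem_univ _⟩
  have hsign : (Equiv.Perm.sign σ : ℤ) = -(-1) ^ Fintype.card B := by
    rw [hcycle.sign, Finset.eq_univ_of_forall fun b => Equiv.Perm.mem_support.2 (hne b),
      Finset.card_univ]
    simp
  have vanish : ∀ τ, τ ≠ 1 ∧ τ ≠ σ →
      Equiv.Perm.sign τ • ∏ b, (monomialMatrix σ s).charmatrix (τ b) b = 0 := by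
    intro τ hτ
    obtain ⟨b, hb⟩ : ∃ b, ¬(τ b = b ∨ τ b = σ b) := by
      by_contra! H
      exact (eq_one_or_eq_of_isCycleOn hσ H).elim hτ.1 hτ.2
    rw [not_or] at hb
    rw [Finset.prod_eq_zero (Finset.mem_univ b), smul_zero]
    rw [charmatrix_monomialMatrix_apply, if_neg hb.1, if_neg hb.2, sub_zero]
  rw [Matrix.charpoly, Matrix.det_apply,
    Fintype.sum_eq_add 1 σ (fun h => hne (Classical.arbitrary B) (by simp [← h])) vanish]
  simp only [charmatrix_monomialMatrix_apply, Equiv.Perm.coe_one, id_eq, hne, (hne _).symm,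
    if_true, if_false, sub_zero, zero_sub, Equiv.Perm.sign_one, one_smul, Finset.prod_const,
    Finset.card_univ, Finset.prod_neg, Units.smul_def, hsign, ← map_prod]
  have hsq : ((-1 : R[X]) ^ Fintype.card B) * (-1) ^ Fintype.card B = 1 := by
    rw [← mul_pow, neg_one_mul, neg_neg, one_pow]
  rw [zsmul_eq_mul]
  push_cast
  linear_combination (-C (∏ b, s b)) * hsq

theorem charpoly_toSquareBlock_monomialMatrix {ι : Type*} [DecidableEq ι] (σ : Equiv.Perm B)
    (s : B → R) {f : B → ι} {r : B} (hf : ∀ b, f b = f r ↔ σ.SameCycle r b) :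
    ((monomialMatrix σ s).toSquareBlock f (f r)).charpoly =
      X ^ Nat.card {b // σ.SameCycle r b} - C (∏ᶠ b ∈ {b | σ.SameCycle r b}, s b) := by
  let σr : Equiv.Perm {b // f b = f r} :=
    σ.subtypePerm fun b => by rw [hf, hf, Equiv.Perm.sameCycle_apply_right]
  have hσr : σr.IsCycleOn Set.univ :=
    ⟨Set.bijOn_univ.2 σr.bijective, fun x _ y _ => Equiv.Perm.sameCycle_subtypePerm.2
      (((hf x).1 x.2).symm.trans ((hf y).1 y.2))⟩
  have : Nonempty {b // f b = f r} := ⟨r, rfl⟩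
  have block_eq : (monomialMatrix σ s).toSquareBlock f (f r) =
      monomialMatrix σr fun b => s b := by
    ext β α
    simp [Matrix.toSquareBlock_def, monomialMatrix_apply, σr, Subtype.ext_iff]
  rw [block_eq, charpoly_monomialMatrix_of_isCycleOn hσr, ← Nat.card_eq_fintype_card,
    Nat.card_congr (Equiv.subtypeEquivRight hf), ← finprod_eq_prod_of_fintype,
    finprod_subtype_eq_finprod_cond]
  simp only [hf, Set.mem_ofPred_eq]

/-- The matrix is block diagonal along the cycles of `σ`, which are labelled by their
representatives. -/
theorem charpoly_monomialMatrix (σ : Equiv.Perm B) (s : B → R) (reps : Finset B)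
    (hreps : ∀ b, ∃! r, r ∈ reps ∧ σ.SameCycle r b) :
    (monomialMatrix σ s).charpoly =
      ∏ r ∈ reps, (X ^ Nat.card {b // σ.SameCycle r b} -
        C (∏ᶠ b ∈ {b | σ.SameCycle r b}, s b)) := by
  choose rep hrep rep_unique using hreps
  have rep_eq_iff : ∀ r ∈ reps, ∀ b, rep b = r ↔ σ.SameCycle r b := fun r hr b =>
    ⟨fun h => h ▸ (hrep b).2, fun h => (rep_unique b r ⟨hr, h⟩).symm⟩
  have rep_apply : ∀ b, rep (σ b) = rep b := fun b =>
    (rep_eq_iff _ (hrep b).1 _).2 (hrep b).2.apply_right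
  have rep_of_mem : ∀ r ∈ reps, rep r = r := fun r hr => (rep_eq_iff r hr r).2 (.refl σ r)
  have image_rep : Finset.univ.image rep = reps := by
    ext r
    simp only [Finset.mem_image, Finset.mem_univ, true_and]
    exact ⟨fun ⟨b, hb⟩ => hb ▸ (hrep b).1, fun hr => ⟨r, rep_of_mem r hr⟩⟩
  let f := Fintype.equivFin B
  have block : (monomialMatrix σ s).BlockTriangular (f ∘ rep) := by
    intro β α h
    refine if_neg ?_
    rintro rfl
    simp [rep_apply] at h
  rw [block.charpoly, ← Finset.image_image, image_rep, Finset.prod_image f.injective.injOn]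
  refine Finset.prod_congr rfl fun r hr => ?_
  have hlabel : (f ∘ rep) r = f r := congrArg f (rep_of_mem r hr)
  rw [← hlabel]
  refine charpoly_toSquareBlock_monomialMatrix σ s fun b => ?_
  rw [hlabel, Function.comp_apply, f.injective.eq_iff, rep_eq_iff r hr]

end MonomialMatrix

section Sylvester

variable {V W R : Type*} [Fintype V] [DecidableEq V] [Fintype W] [DecidableEq W] [CommRing R]

theorem charpoly_one_sub (M : Matrix V V R) :
    (1 - M).charpoly = (-M).charpoly.comp (X - 1) := by
  simpa [sub_eq_add_neg, add_comm] using Matrix.charpoly_sub_scalar (-M) (-1)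

theorem charpoly_one_sub_mul_comm (M : Matrix V W R) (N : Matrix W V R) :
    (X - 1) ^ Fintype.card W * (1 - M * N).charpoly =
      (X - 1) ^ Fintype.card V * (1 - N * M).charpoly := by
  have h := congrArg (fun p => p.comp (X - 1)) (Matrix.charpoly_mul_comm' (-M) N)
  simpa only [mul_comp, pow_comp, X_comp, Matrix.neg_mul, Matrix.mul_neg,
    ← charpoly_one_sub] using h

end Sylvester

theorem finprod_mem_pow_eq_pow_finsum_mem {B R : Type*} [Finite B] [CommMonoid R] (a : R)
    (n : B → ℕ) (s : Set B) : ∏ᶠ b ∈ s, a ^ n b = a ^ ∑ᶠ b ∈ s, n b := by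
  rw [finprod_mem_eq_finite_toFinset_prod _ s.toFinite,
    finsum_mem_eq_finite_toFinset_sum _ s.toFinite, Finset.prod_pow_eq_pow_sum]

theorem ncard_sep_prod_le_min {α β : Type*} [Finite α] [Finite β] {R : α → β → Prop}
    (hR : Relator.BiUnique R) (s : Set α) (t : Set β) :
    {p ∈ s ×ˢ t | R p.1 p.2}.ncard ≤ min s.ncard t.ncard := by
  refine le_min ?_ ?_
  · exact Set.ncard_le_ncard_of_injOn Prod.fst (fun p hp => hp.1.1)
      fun p hp q hq (h : p.1 = q.1) => Prod.ext h (hR.2 hp.2 (h ▸ hq.2))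
  · exact Set.ncard_le_ncard_of_injOn Prod.snd (fun p hp => hp.1.2)
      fun p hp q hq (h : p.2 = q.2) => Prod.ext (hR.1 hp.2 (h ▸ hq.2)) h

/-! ### Permitted threads and their splits -/

namespace BQuiv

variable {V A : Type} {Q : BQuiv V A}

/-- `ab` is a permitted path of length two. -/
def PermittedStep (Q : BQuiv V A) (a b : A) : Prop := Q.src a = Q.tgt b ∧ ¬Q.rel a b

theorem isChain_permittedStep_iff {l : List A} :
    l.IsChain Q.PermittedStep ↔
      l.IsChain (fun a b => Q.src a = Q.tgt b) ∧ l.IsChain (fun a b => ¬Q.rel a b) := by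
  simp only [List.isChain_iff_getElem, PermittedStep, forall_and]

theorem IsGentle.biUnique_permittedStep (hQ : Q.IsGentle) : Relator.BiUnique Q.PermittedStep :=
  ⟨fun _ _ _ h h' => hQ.unique_nonrel_post _ _ _ h.1 h'.1 h.2 h'.2,
    fun _ _ _ h h' => hQ.unique_nonrel_pre _ _ _ h.1 h'.1 h.2 h'.2⟩

theorem IsGentle.exists_forall_length_le (hQ : Q.IsGentle) :
    ∃ m, ∀ l : List A, l.IsChain Q.PermittedStep → l.length ≤ m := by
  obtain ⟨m, -, hm⟩ := hQ.admissible
  refine ⟨m, fun l hl => ?_⟩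
  by_contra! hlong
  obtain ⟨hpath, hperm⟩ := isChain_permittedStep_iff.1 (hl.take m)
  exact hm (l.take m) (List.length_take_of_le hlong.le) hpath hperm

namespace Path

variable {p q : Path Q} {a : A} {k n : ℕ}

theorem eq_of_base_eq_of_arrows_eq (hbase : p.base = q.base) (harrows : p.arrows = q.arrows) :
    p = q := by
  cases p
  cases q
  cases hbase
  cases harrows
  rfl

theorem eq_of_arrows_eq (hp : p.arrows ≠ []) (harrows : p.arrows = q.arrows) : p = q := by
  refine eq_of_base_eq_of_arrows_eq ?_ harrows
  have hlast := List.getLast?_eq_some_getLast hp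
  rw [← p.base_eq _ hlast, q.base_eq _ (harrows ▸ hlast)]

theorem Permitted.isChain (hp : p.Permitted) : p.arrows.IsChain Q.PermittedStep :=
  isChain_permittedStep_iff.2 ⟨p.chain, hp⟩

theorem vertexAt_eq (p : Path Q) (n : ℕ) : p.vertexAt n = p.arrows[n]?.elim p.base Q.tgt := by
  rw [vertexAt, List.head?_drop]

theorem vertexAt_of_getElem? (ha : p.arrows[k]? = some a) : p.vertexAt k = Q.tgt a := by
  rw [vertexAt_eq, ha, Option.elim_some]

theorem vertexAt_of_length_le (hn : p.arrows.length ≤ n) : p.vertexAt n = p.base := by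
  rw [vertexAt_eq, List.getElem?_eq_none hn, Option.elim_none]

theorem vertexAt_succ_of_getElem? (ha : p.arrows[k]? = some a) : p.vertexAt (k + 1) = Q.src a := by
  obtain ⟨hk, rfl⟩ := List.getElem?_eq_some_iff.1 ha
  rcases Nat.lt_or_ge (k + 1) p.arrows.length with hk1 | hk1
  · rw [vertexAt_of_getElem? (List.getElem?_eq_getElem hk1)]
    exact (List.isChain_iff_getElem.1 p.chain k hk1).symm
  · rw [vertexAt_of_length_le hk1, p.base_eq p.arrows[k]]
    rw [List.getLast?_eq_getElem?, show p.arrows.length - 1 = k by lia, ha]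

end Path

namespace PThread

variable {p q : PThread Q} {a : A} {j k : ℕ}

theorem isInextensibleChain (p : PThread Q) :
    IsInextensibleChain Q.PermittedStep p.1.arrows := by
  rcases p.2 with ⟨-, hperm, hhead, hlast⟩ | ⟨hnil, -⟩
  · exact ⟨hperm.isChain, fun a b hb h => h.2 (hhead a b hb h.1),
      fun a b ha h => h.2 (hlast a b ha h.1)⟩
  · rw [hnil]
    exact ⟨.nil, by simp, by simp⟩

theorem eq_and_idx_eq (hQ : Q.IsGentle) (hp : p.1.arrows[j]? = some a)
    (hq : q.1.arrows[k]? = some a) : p = q ∧ j = k := by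
  have hR := hQ.biUnique_permittedStep
  refine ⟨Subtype.ext (Path.eq_of_arrows_eq ?_ ?_),
    (p.isInextensibleChain.idx_eq_and_head?_eq hR.1 q.isInextensibleChain hp hq).1⟩
  · exact List.ne_nil_of_length_pos (by have := (List.getElem?_eq_some_iff.1 hp).1; lia)
  · exact p.isInextensibleChain.eq_of_getElem?_eq hR q.isInextensibleChain hp hq

end PThread

theorem isPermThread_of_isInextensibleChain {p : Path Q} (hne : p.arrows ≠ [])
    (h : IsInextensibleChain Q.PermittedStep p.arrows) : IsPermThread Q p :=
  .inl ⟨hne, (isChain_permittedStep_iff.1 h.isChain).2,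
    fun a b hb hab => not_not.1 fun hrel => h.not_rel_head a b hb ⟨hab, hrel⟩,
    fun a b ha hab => not_not.1 fun hrel => h.not_getLast_rel a b ha ⟨hab, hrel⟩⟩

theorem IsGentle.exists_thread_getElem? (hQ : Q.IsGentle) (a : A) :
    ∃ (p : PThread Q) (k : ℕ), p.1.arrows[k]? = some a := by
  obtain ⟨m, hm⟩ := hQ.exists_forall_length_le
  obtain ⟨l, hl, hal⟩ := exists_isInextensibleChain_mem hm a
  have hne : l ≠ [] := List.ne_nil_of_mem hal
  let p : Path Q :=
    { base := Q.src (l.getLast hne)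
      arrows := l
      chain := (isChain_permittedStep_iff.1 hl.isChain).1
      base_eq := fun b hb => by
        rw [← Option.some_inj.1 (hb.symm.trans (List.getLast?_eq_some_getLast hne))] }
  obtain ⟨k, hk⟩ := List.mem_iff_getElem?.1 hal
  exact ⟨⟨p, isPermThread_of_isInextensibleChain hne hl⟩, k, hk⟩

theorem PSplit.ext {x y : PSplit Q} (hthread : x.thread = y.thread) (hidx : x.idx = y.idx) :
    x = y :=
  Subtype.ext (Prod.ext hthread hidx)

theorem IsGentle.exists_tgtSplit (hQ : Q.IsGentle) (a : A) :
    ∃ x : PSplit Q, x.thread.1.arrows[x.idx]? = some a := by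
  obtain ⟨p, k, hk⟩ := hQ.exists_thread_getElem? a
  exact ⟨⟨(p, k), (List.getElem?_eq_some_iff.1 hk).1.le⟩, hk⟩

theorem IsGentle.exists_srcSplit (hQ : Q.IsGentle) (a : A) :
    ∃ x : PSplit Q, ∃ k, x.idx = k + 1 ∧ x.thread.1.arrows[k]? = some a := by
  obtain ⟨p, k, hk⟩ := hQ.exists_thread_getElem? a
  exact ⟨⟨(p, k + 1), (List.getElem?_eq_some_iff.1 hk).1⟩, k, rfl, hk⟩

/-- The split permitted thread cut at the target of the arrow `a`, so that `a` is the first letter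
of its right factor. -/
noncomputable def IsGentle.tgtSplit (hQ : Q.IsGentle) (a : A) : PSplit Q :=
  (hQ.exists_tgtSplit a).choose

/-- The split permitted thread cut at the source of the arrow `a`, so that `a` is the last letter
of its left factor. -/
noncomputable def IsGentle.srcSplit (hQ : Q.IsGentle) (a : A) : PSplit Q :=
  (hQ.exists_srcSplit a).choose

namespace IsGentle

variable (hQ : Q.IsGentle) {a b : A} {x : PSplit Q} {k : ℕ}
include hQ

theorem getElem?_tgtSplit (a : A) :
    (hQ.tgtSplit a).thread.1.arrows[(hQ.tgtSplit a).idx]? = some a :=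
  (hQ.exists_tgtSplit a).choose_spec

theorem getElem?_srcSplit (a : A) :
    ∃ k, (hQ.srcSplit a).idx = k + 1 ∧ (hQ.srcSplit a).thread.1.arrows[k]? = some a :=
  (hQ.exists_srcSplit a).choose_spec

theorem eq_tgtSplit (hx : x.thread.1.arrows[x.idx]? = some a) : x = hQ.tgtSplit a :=
  (PThread.eq_and_idx_eq hQ hx (hQ.getElem?_tgtSplit a)).elim PSplit.ext

theorem eq_srcSplit (hk : x.idx = k + 1) (hx : x.thread.1.arrows[k]? = some a) :
    x = hQ.srcSplit a := by
  obtain ⟨j, hj, ha⟩ := hQ.getElem?_srcSplit a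
  obtain ⟨hthread, rfl⟩ := PThread.eq_and_idx_eq hQ hx ha
  exact PSplit.ext hthread (hk.trans hj.symm)

theorem center_tgtSplit (a : A) : (hQ.tgtSplit a).center = Q.tgt a :=
  Path.vertexAt_of_getElem? (hQ.getElem?_tgtSplit a)

theorem center_srcSplit (a : A) : (hQ.srcSplit a).center = Q.src a := by
  obtain ⟨k, hk, ha⟩ := hQ.getElem?_srcSplit a
  rw [PSplit.center, ← Path.vertexAt_succ_of_getElem? ha, ← hk]
  rfl

theorem tgtSplit_injective : Function.Injective hQ.tgtSplit := fun a b hab =>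
  Option.some_injective _ <| by rw [← hQ.getElem?_tgtSplit a, hab, hQ.getElem?_tgtSplit b]

theorem srcSplit_injective : Function.Injective hQ.srcSplit := by
  intro a b hab
  obtain ⟨k, hk, ha⟩ := hQ.getElem?_srcSplit a
  obtain ⟨j, hj, hb⟩ := hQ.getElem?_srcSplit b
  rw [hab, hj, Nat.add_right_cancel_iff] at hk
  rw [hab, ← hk, hb] at ha
  exact (Option.some_injective _ ha).symm

theorem srcSplit_eq_tgtSplit_iff : hQ.srcSplit a = hQ.tgtSplit b ↔ Q.PermittedStep a b := by
  obtain ⟨k, hk, ha⟩ := hQ.getElem?_srcSplit a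
  rw [← (hQ.srcSplit a).thread.isInextensibleChain.getElem?_succ_eq_some_iff
    hQ.biUnique_permittedStep.2 ha, ← hk]
  exact ⟨fun h => h ▸ hQ.getElem?_tgtSplit b, hQ.eq_tgtSplit⟩

end IsGentle

/-- The set of arrows starting at `v`. -/
def outArrows (Q : BQuiv V A) (v : V) : Set A := {a | Q.src a = v}

/-- The set of arrows ending at `v`. -/
def inArrows (Q : BQuiv V A) (v : V) : Set A := {b | Q.tgt b = v}

/-- The set of permitted paths `ab` of length two passing through `v`. -/
def permittedTurns (Q : BQuiv V A) (v : V) : Set (A × A) :=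
  {p ∈ Q.outArrows v ×ˢ Q.inArrows v | Q.PermittedStep p.1 p.2}

/-- The set of splits of trivial permitted threads at `v`. -/
def trivialSplits (Q : BQuiv V A) (v : V) : Set (PSplit Q) :=
  {x | x.center = v ∧ x.thread.1.arrows = []}

theorem deg_eq_ncard_add_ncard (Q : BQuiv V A) (v : V) :
    Q.deg v = (Q.outArrows v).ncard + (Q.inArrows v).ncard := rfl

theorem base_eq_of_mem_trivialSplits {v : V} {x : PSplit Q} (hx : x ∈ Q.trivialSplits v) :
    x.thread.1.base = v := by
  rw [← hx.1]
  exact (Path.vertexAt_of_length_le (by simp [hx.2])).symm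

theorem trivialSplits_subsingleton (Q : BQuiv V A) (v : V) : (Q.trivialSplits v).Subsingleton := by
  intro x hx y hy
  have hthread : x.thread = y.thread := Subtype.ext <| Path.eq_of_base_eq_of_arrows_eq
    ((base_eq_of_mem_trivialSplits hx).trans (base_eq_of_mem_trivialSplits hy).symm)
    (hx.2.trans hy.2.symm)
  have idx_eq_zero : ∀ z ∈ Q.trivialSplits v, z.idx = 0 := fun z hz =>
    Nat.le_zero.1 (z.2.trans_eq (List.length_eq_zero_iff.2 hz.2))
  exact PSplit.ext hthread ((idx_eq_zero x hx).trans (idx_eq_zero y hy).symm)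

theorem trivialSplits_nonempty_iff (Q : BQuiv V A) (v : V) :
    (Q.trivialSplits v).Nonempty ↔ Q.deg v = 1 ∨ (Q.deg v = 2 ∧ (Q.permittedTurns v).Nonempty) := by
  have hturns : (Q.permittedTurns v).Nonempty ↔
      ∃ a b, Q.src a = v ∧ Q.tgt b = v ∧ ¬Q.rel a b :=
    ⟨fun ⟨p, hp, hstep⟩ => ⟨p.1, p.2, hp.1, hp.2, hstep.2⟩,
      fun ⟨a, b, ha, hb, hab⟩ => ⟨(a, b), ⟨ha, hb⟩, ha.trans hb.symm, hab⟩⟩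
  rw [hturns]
  constructor
  · rintro ⟨x, hx⟩
    rcases x.thread.2 with ⟨hne, -⟩ | ⟨-, hdeg⟩
    · exact absurd hx.2 hne
    · rwa [base_eq_of_mem_trivialSplits hx] at hdeg
  · intro hdeg
    let p : Path Q := ⟨v, [], .nil, by simp⟩
    exact ⟨⟨(⟨p, .inr ⟨rfl, hdeg⟩⟩, 0), le_rfl⟩, rfl, rfl⟩

namespace IsGentle

variable (hQ : Q.IsGentle)
include hQ

theorem deg_pos [Finite A] (v : V) : 0 < Q.deg v := by
  obtain ⟨a⟩ := hQ.has_arrow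
  suffices ∃ b, Q.src b = v ∨ Q.tgt b = v by
    obtain ⟨b, hb | hb⟩ := this
    · exact Nat.add_pos_left ((Set.ncard_pos (s := Q.outArrows v)).2 ⟨b, hb⟩) _
    · exact Nat.add_pos_right _ ((Set.ncard_pos (s := Q.inArrows v)).2 ⟨b, hb⟩)
  rcases Relation.ReflTransGen.cases_head (hQ.connected v (Q.src a)) with h | ⟨_, ⟨b, hb⟩, -⟩
  · exact ⟨a, .inl h.symm⟩
  · exact ⟨b, hb.imp And.left And.right⟩

theorem ncard_permittedTurns_le [Finite A] (v : V) :
    (Q.permittedTurns v).ncard ≤ min (Q.outArrows v).ncard (Q.inArrows v).ncard :=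
  ncard_sep_prod_le_min hQ.biUnique_permittedStep _ _

theorem ncard_mul_ncard_le [Finite A] (v : V) :
    (Q.outArrows v).ncard * (Q.inArrows v).ncard ≤
      (Q.permittedTurns v).ncard + min (Q.outArrows v).ncard (Q.inArrows v).ncard := by
  have hrel : Relator.BiUnique Q.rel :=
    ⟨fun _ _ _ => hQ.unique_rel_post _ _ _, fun _ _ _ => hQ.unique_rel_pre _ _ _⟩
  have hcover : Q.outArrows v ×ˢ Q.inArrows v ⊆ Q.permittedTurns v ∪
      {p ∈ Q.outArrows v ×ˢ Q.inArrows v | Q.rel p.1 p.2} := fun p hp =>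
    or_iff_not_imp_right.2 fun hnrel =>
      ⟨hp, hp.1.trans hp.2.symm, fun h => hnrel ⟨hp, h⟩⟩
  rw [← Set.ncard_prod]
  calc (Q.outArrows v ×ˢ Q.inArrows v).ncard
      ≤ (Q.permittedTurns v).ncard +
          {p ∈ Q.outArrows v ×ˢ Q.inArrows v | Q.rel p.1 p.2}.ncard :=
        (Set.ncard_le_ncard hcover).trans (Set.ncard_union_le _ _)
    _ ≤ _ := Nat.add_le_add_left (ncard_sep_prod_le_min hrel _ _) _

theorem setOf_center_eq (v : V) :
    {x : PSplit Q | x.center = v} =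
      hQ.srcSplit '' Q.outArrows v ∪ hQ.tgtSplit '' Q.inArrows v ∪ Q.trivialSplits v := by
  ext x
  constructor
  · rintro rfl
    have hidx : x.idx ≤ x.thread.1.arrows.length := x.2
    rcases hidx.lt_or_eq with hlt | hlast
    · have hx := hQ.eq_tgtSplit (x := x) (List.getElem?_eq_getElem hlt)
      exact .inl (.inr ⟨_, (hQ.center_tgtSplit _).symm.trans (by rw [← hx]), hx.symm⟩)
    rcases Nat.eq_zero_or_eq_succ_pred x.idx with hzero | hsucc
    · exact .inr ⟨rfl, List.length_eq_zero_iff.1 (hlast.symm.trans hzero)⟩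
    · have hx := hQ.eq_srcSplit hsucc (List.getElem?_eq_getElem (by lia))
      exact .inl (.inl ⟨_, (hQ.center_srcSplit _).symm.trans (by rw [← hx]), hx.symm⟩)
  · rintro ((⟨a, rfl, rfl⟩ | ⟨b, rfl, rfl⟩) | hx)
    · exact hQ.center_srcSplit a
    · exact hQ.center_tgtSplit b
    · exact hx.1

theorem disjoint_trivialSplits (s t : Set A) (v : V) :
    Disjoint (hQ.srcSplit '' s ∪ hQ.tgtSplit '' t) (Q.trivialSplits v) := by
  rw [Set.disjoint_left]
  rintro _ (⟨a, -, rfl⟩ | ⟨b, -, rfl⟩) ⟨-, hnil⟩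
  · obtain ⟨k, -, ha⟩ := hQ.getElem?_srcSplit a
    simp [hnil] at ha
  · have hb := hQ.getElem?_tgtSplit b
    simp [hnil] at hb

theorem ncard_srcSplit_inter_tgtSplit (v : V) :
    (hQ.srcSplit '' Q.outArrows v ∩ hQ.tgtSplit '' Q.inArrows v).ncard =
      (Q.permittedTurns v).ncard := by
  have himage : hQ.srcSplit '' Q.outArrows v ∩ hQ.tgtSplit '' Q.inArrows v =
      (fun p : A × A => hQ.tgtSplit p.2) '' Q.permittedTurns v := by
    ext x
    constructor
    · rintro ⟨⟨a, ha, rfl⟩, b, hb, hba⟩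
      exact ⟨(a, b), ⟨⟨ha, hb⟩, hQ.srcSplit_eq_tgtSplit_iff.1 hba.symm⟩, hba⟩
    · rintro ⟨⟨a, b⟩, ⟨⟨ha, hb⟩, hab⟩, rfl⟩
      exact ⟨⟨a, ha, hQ.srcSplit_eq_tgtSplit_iff.2 hab⟩, b, hb, rfl⟩
  rw [himage, Set.InjOn.ncard_image]
  intro p hp q hq h
  have hsnd : p.2 = q.2 := hQ.tgtSplit_injective h
  exact Prod.ext (hQ.biUnique_permittedStep.1 hp.2 (hsnd ▸ hq.2)) hsnd

/-- Writing `o`, `i` and `n` for the numbers of outgoing arrows, incoming arrows and permitted turns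
at `v`, the arrows at `v` contribute `o + i - n` splits. Gentleness forces `n ≤ min o i` and
`o * i - n ≤ min o i`, which leaves `o + i - n = 2` except in the cases where a trivial thread
supplies the missing split. -/
theorem ncard_center_eq_two [Finite A] (v : V) : {x : PSplit Q | x.center = v}.ncard = 2 := by
  have hfin := (Q.trivialSplits_subsingleton v).finite
  have hunion := Set.ncard_union_add_ncard_inter
    (hQ.srcSplit '' Q.outArrows v) (hQ.tgtSplit '' Q.inArrows v)
  rw [Set.ncard_image_of_injective _ hQ.srcSplit_injective,
    Set.ncard_image_of_injective _ hQ.tgtSplit_injective, hQ.ncard_srcSplit_inter_tgtSplit]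
    at hunion
  have htriv := Q.trivialSplits_nonempty_iff v
  have htriv_le := (Set.ncard_le_one hfin).2
    fun x hx y hy => Q.trivialSplits_subsingleton v hx hy
  have hturns := hQ.ncard_permittedTurns_le v
  have hmul := hQ.ncard_mul_ncard_le v
  have hdeg := hQ.deg_pos v
  have hout : (Q.outArrows v).ncard ≤ 2 := hQ.out_le v
  have hin : (Q.inArrows v).ncard ≤ 2 := hQ.in_le v
  rw [hQ.setOf_center_eq,
    Set.ncard_union_eq (hQ.disjoint_trivialSplits _ _ v) (Set.toFinite _) hfin]
  rw [← Set.ncard_pos hfin, ← Set.ncard_pos] at htriv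
  rw [deg_eq_ncard_add_ncard] at htriv hdeg
  generalize (Q.outArrows v).ncard = o at *
  generalize (Q.inArrows v).ncard = i at *
  interval_cases o <;> interval_cases i <;> lia

end IsGentle

/-! ### Anti-walks -/

theorem setOf_center_eq_pair [Finite A] (hQ : Q.IsGentle) (i : DOE Q) :
    {x : PSplit Q | x.center = i.ctr} = {i.tS, i.sS} := by
  have hcard := hQ.ncard_center_eq_two i.ctr
  refine (Set.eq_of_subset_of_ncard_le ?_ ?_ (Set.finite_of_ncard_ne_zero (by lia))).symm
  · rintro _ (rfl | rfl)
    · rfl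
    · exact i.2.2.symm
  · rw [hcard]
    exact (Set.ncard_pair i.2.1).ge

theorem center_eq_ctr_iff [Finite A] (hQ : Q.IsGentle) (x : PSplit Q) (i : DOE Q) :
    x.center = i.ctr ↔ x = i.tS ∨ x = i.sS :=
  Set.ext_iff.1 (setOf_center_eq_pair hQ i) x

theorem exists_sS_eq [Finite A] (hQ : Q.IsGentle) (x : PSplit Q) : ∃ i : DOE Q, i.sS = x := by
  have hcard := hQ.ncard_center_eq_two x.center
  obtain ⟨y, hy, hyx⟩ := Set.exists_ne_of_one_lt_ncard (s := {y | y.center = x.center}) (by lia) x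
  exact ⟨⟨(y, x), hyx, hy⟩, rfl⟩

namespace IsAntiDW

variable {l : List (DOE Q)} {i : DOE Q}

theorem idx_tS_head [Finite A] (hQ : Q.IsGentle) (hl : IsAntiDW Q l) (hi : l.head? = some i) :
    i.tS.idx = 0 := by
  by_contra hne
  obtain ⟨k, hk⟩ := Nat.exists_eq_succ_of_ne_zero hne
  have hidx : i.tS.idx ≤ i.tS.thread.1.arrows.length := i.tS.2
  obtain ⟨i₀, hi₀⟩ := exists_sS_eq hQ ⟨(i.tS.thread, k), by lia⟩
  exact hl.2.2.2.1 i hi i₀ (hi₀ ▸ ⟨rfl, hk⟩)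

theorem idx_sS_getLast [Finite A] (hQ : Q.IsGentle) (hl : IsAntiDW Q l)
    (hi : l.getLast? = some i) : i.sS.idx = i.svx.1.arrows.length := by
  have hidx : i.sS.idx ≤ i.svx.1.arrows.length := i.sS.2
  by_contra hne
  obtain ⟨i₂, hi₂⟩ := exists_sS_eq hQ ⟨(i.sS.thread, i.sS.idx + 1), hidx.lt_of_ne hne⟩
  exact hl.2.2.2.2 i hi i₂.inv (show DSucc i₂.sS i.sS from hi₂ ▸ ⟨rfl, rfl⟩)

end IsAntiDW

theorem incVec_cons (i : DOE Q) (l : List (DOE Q)) :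
    incVec (i :: l) = Pi.single i.ctr 1 - incVec l := by
  ext v
  simp [incVec, Pi.single_apply, eq_comm]

/-- The alternating sum telescopes, because consecutive edges of `l` share the value
`g i = f j`. -/
theorem map_incVec {M : Type*} [AddCommGroup M] (F : (V → ℤ) →+ M) {f g : DOE Q → M}
    (hF : ∀ i : DOE Q, F (Pi.single i.ctr 1) = f i + g i) {l : List (DOE Q)}
    (hl : l.IsChain fun i j => g i = f j) {a b : DOE Q} (ha : l.head? = some a)
    (hb : l.getLast? = some b) : F (incVec l) = f a - (-1 : ℤ) ^ l.length • g b := by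
  induction l generalizing a with
  | nil => simp at ha
  | cons i l ih =>
    obtain rfl : i = a := by simpa using ha
    rw [incVec_cons, map_sub, hF]
    cases l with
    | nil =>
      obtain rfl : i = b := by simpa using hb
      have : incVec ([] : List (DOE Q)) = 0 := rfl
      simp [this]
    | cons j l =>
      obtain ⟨hij, hchain⟩ := List.isChain_cons_cons.1 hl
      rw [ih hchain rfl (by simpa using hb), hij, List.length_cons (a := i), pow_succ,
        mul_neg_one, neg_smul]
      abel

namespace Path

variable {p : Path Q} {k n : ℕ}

/-- The sum of the basis vectors of the vertices at the first `n` cut positions of a path. -/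
noncomputable def initialVec (p : Path Q) (n : ℕ) : V → ℤ :=
  ∑ k ∈ Finset.range n, Pi.single (p.vertexAt k) 1

theorem initialVec_zero (p : Path Q) : p.initialVec 0 = 0 := Finset.sum_range_zero _

theorem initialVec_succ (p : Path Q) (n : ℕ) :
    p.initialVec (n + 1) = p.initialVec n + Pi.single (p.vertexAt n) 1 :=
  Finset.sum_range_succ _ n

theorem initialVec_apply (p : Path Q) (n : ℕ) (u : V) :
    p.initialVec n u = {k | k < n ∧ p.vertexAt k = u}.ncard := by
  simp only [initialVec, Finset.sum_apply, Pi.single_apply, Finset.sum_boole]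
  rw [← Set.ncard_coe_finset]
  congr 2
  ext k
  simp [eq_comm]

theorem finite_setOf_vertexAt_eq (p : Path Q) (n : ℕ) (u : V) :
    {k | k < n ∧ p.vertexAt k = u}.Finite :=
  (Set.finite_lt_nat n).subset fun _ hk => hk.1

/-- The subpath of `p` between its cut positions `k` and `n`. -/
def segment (p : Path Q) (k n : ℕ) : Path Q where
  base := p.vertexAt n
  arrows := (p.arrows.take n).drop k
  chain := (p.chain.take n).drop k
  base_eq a ha := by
    have hlast : (p.arrows.take n).getLast? = some a := by
      rw [List.getLast?_drop] at ha
      exact (Option.ite_none_left_eq_some.1 ha).2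
    rw [List.getLast?_take] at hlast
    obtain ⟨hn, hlast⟩ := Option.ite_none_left_eq_some.1 hlast
    rcases Nat.lt_or_ge (n - 1) p.arrows.length with h | h
    · rw [List.getElem?_eq_getElem h, Option.some_or] at hlast
      rw [← vertexAt_succ_of_getElem? ((List.getElem?_eq_getElem h).trans hlast),
        Nat.sub_one_add_one hn]
    · rw [List.getElem?_eq_none h, Option.none_or] at hlast
      rw [p.base_eq a hlast, vertexAt_of_length_le (h.trans n.pred_le)]

theorem getElem?_segment_zero (h : k < n) : (p.segment k n).arrows[0]? = p.arrows[k]? := by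
  simp [segment, h]

theorem Permitted.segment (hp : p.Permitted) (k n : ℕ) : (p.segment k n).Permitted :=
  (List.IsChain.take hp n).drop k

theorem tgtV_segment (hk : k < n) (hn : n ≤ p.arrows.length) :
    (p.segment k n).tgtV = p.vertexAt k := by
  have ha := List.getElem?_eq_getElem (l := p.arrows) (i := k) (by lia)
  rw [vertexAt_of_getElem? ha, tgtV, List.head?_eq_getElem?, getElem?_segment_zero hk, ha,
    Option.elim_some]

end Path

/-! ### Permitted paths and the Cartan matrix -/

/-- The set of permitted paths from `v` to `u`. -/
def permittedPaths (Q : BQuiv V A) (u v : V) : Set (Path Q) :=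
  {p | p.Permitted ∧ p.base = v ∧ p.tgtV = u}

/-- The set of pairs consisting of a split with center `v` and an earlier cut position of the same
thread at `u`. -/
def cutPairs (Q : BQuiv V A) (u v : V) : Set (PSplit Q × ℕ) :=
  {y | y.1.center = v ∧ y.2 < y.1.idx ∧ y.1.thread.1.vertexAt y.2 = u}

/-- The subpath of a thread between the two positions of a cut pair. -/
def cutPairSegment (y : PSplit Q × ℕ) : Path Q := y.1.thread.1.segment y.2 y.1.idx

theorem cutPairSegment_mem {u v : V} {y : PSplit Q × ℕ} (hy : y ∈ Q.cutPairs u v) :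
    cutPairSegment y ∈ Q.permittedPaths u v := by
  obtain ⟨hv, hlt, hu⟩ := hy
  have hperm : y.1.thread.1.Permitted :=
    (isChain_permittedStep_iff.1 y.1.thread.isInextensibleChain.isChain).2
  exact ⟨hperm.segment _ _, hv, (Path.tgtV_segment hlt y.1.2).trans hu⟩

theorem length_cutPairSegment (y : PSplit Q × ℕ) :
    (cutPairSegment y).arrows.length = y.1.idx - y.2 := by
  have hidx : y.1.idx ≤ y.1.thread.1.arrows.length := y.1.2
  simp [cutPairSegment, Path.segment, hidx]

theorem cutPairSegment_injOn (hQ : Q.IsGentle) (u v : V) :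
    Set.InjOn cutPairSegment (Q.cutPairs u v) := by
  rintro ⟨x, k⟩ ⟨-, hk, -⟩ ⟨x', k'⟩ ⟨-, hk', -⟩ h
  have hlength := congrArg (fun p : Path Q => p.arrows.length) h
  simp only [length_cutPairSegment] at hlength
  have hfirst : x.thread.1.arrows[k]? = x'.thread.1.arrows[k']? := by
    rw [← Path.getElem?_segment_zero hk, ← Path.getElem?_segment_zero hk']
    exact congrArg (fun p : Path Q => p.arrows[0]?) h
  have hlt : k < x.thread.1.arrows.length := hk.trans_le x.2
  have hget := List.getElem?_eq_getElem hlt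
  obtain ⟨hthread, rfl⟩ := PThread.eq_and_idx_eq hQ hget (hfirst.symm.trans hget)
  have hidx : x.idx = x'.idx := by
    dsimp only at hlength hk hk'
    lia
  rw [PSplit.ext hthread hidx]

theorem exists_cutPairSegment_eq (hQ : Q.IsGentle) {u v : V} {p : Path Q}
    (hp : p ∈ Q.permittedPaths u v) (hne : p.arrows ≠ []) :
    ∃ y ∈ Q.cutPairs u v, cutPairSegment y = p := by
  obtain ⟨hperm, rfl, rfl⟩ := hp
  obtain ⟨a, ha⟩ := Option.isSome_iff_exists.1 (List.isSome_head?.2 hne)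
  obtain ⟨q, k, hk⟩ := hQ.exists_thread_getElem? a
  have hinit : p.arrows <+: q.1.arrows.drop k :=
    q.isInextensibleChain.isPrefix_drop hQ.biUnique_permittedStep.2 hperm.isChain
      (ha.trans hk.symm)
  have hpos := List.length_pos_iff.2 hne
  have hlen := hinit.length_le
  rw [List.length_drop] at hlen
  let y : PSplit Q × ℕ := (⟨(q, k + p.arrows.length), by dsimp only; lia⟩, k)
  have hy : p = cutPairSegment y := by
    refine Path.eq_of_arrows_eq hne ?_
    change p.arrows = (q.1.arrows.take (k + p.arrows.length)).drop k
    rw [List.drop_take, Nat.add_sub_cancel_left]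
    exact List.prefix_iff_eq_take.1 hinit
  have hlt : y.2 < y.1.idx := Nat.lt_add_of_pos_right hpos
  refine ⟨y, ⟨?_, hlt, ?_⟩, hy.symm⟩
  · exact congrArg Path.base hy.symm
  · exact (Path.tgtV_segment hlt y.1.2).symm.trans (congrArg Path.tgtV hy.symm)

theorem ncard_trivialPaths (Q : BQuiv V A) (u v : V) :
    {p ∈ Q.permittedPaths u v | p.arrows = []}.ncard = if u = v then 1 else 0 := by
  split_ifs with h
  · subst h
    refine Set.ncard_eq_one.2 ⟨⟨u, [], .nil, by simp⟩, Set.eq_singleton_iff_unique_mem.2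
      ⟨⟨⟨.nil, rfl, rfl⟩, rfl⟩, fun p hp => ?_⟩⟩
    exact Path.eq_of_base_eq_of_arrows_eq hp.1.2.1 hp.2
  · have hempty : {p ∈ Q.permittedPaths u v | p.arrows = []} = ∅ := by
      refine Set.eq_empty_of_forall_notMem ?_
      rintro p ⟨⟨-, hv, hu⟩, hnil⟩
      exact h (by simpa [Path.tgtV, hnil, hv] using hu.symm)
    rw [hempty, Set.ncard_empty]

theorem permittedPaths_eq (hQ : Q.IsGentle) (u v : V) :
    Q.permittedPaths u v =
      {p ∈ Q.permittedPaths u v | p.arrows = []} ∪ cutPairSegment '' Q.cutPairs u v := by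
  ext p
  constructor
  · intro hp
    by_cases hnil : p.arrows = []
    · exact .inl ⟨hp, hnil⟩
    · exact .inr (exists_cutPairSegment_eq hQ hp hnil)
  · rintro (hp | ⟨y, hy, rfl⟩)
    · exact hp.1
    · exact cutPairSegment_mem hy

theorem cutPairs_ctr [Finite A] (hQ : Q.IsGentle) (u : V) (i : DOE Q) :
    Q.cutPairs u i.ctr =
      {i.tS} ×ˢ {k | k < i.tS.idx ∧ i.tS.thread.1.vertexAt k = u} ∪
        {i.sS} ×ˢ {k | k < i.sS.idx ∧ i.sS.thread.1.vertexAt k = u} := by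
  ext ⟨x, k⟩
  simp only [cutPairs, Set.mem_ofPred_eq, center_eq_ctr_iff hQ, Set.mem_union, Set.mem_prod,
    Set.mem_singleton_iff]
  constructor
  · rintro ⟨rfl | rfl, h⟩
    · exact .inl ⟨rfl, h⟩
    · exact .inr ⟨rfl, h⟩
  · rintro (⟨rfl, h⟩ | ⟨rfl, h⟩)
    · exact ⟨.inl rfl, h⟩
    · exact ⟨.inr rfl, h⟩

theorem ncard_cutPairs [Finite A] (hQ : Q.IsGentle) (u : V) (i : DOE Q) :
    (Q.cutPairs u i.ctr).ncard =
      (i.tS.thread.1.initialVec i.tS.idx + i.sS.thread.1.initialVec i.sS.idx) u := by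
  have hdisj : Disjoint
      (({i.tS} : Set (PSplit Q)) ×ˢ {k | k < i.tS.idx ∧ i.tS.thread.1.vertexAt k = u})
      ({i.sS} ×ˢ {k | k < i.sS.idx ∧ i.sS.thread.1.vertexAt k = u}) :=
    Set.disjoint_prod.2 (.inl (Set.disjoint_singleton.2 i.2.1))
  rw [cutPairs_ctr hQ, Set.ncard_union_eq hdisj ((Set.finite_singleton _).prod
    (Path.finite_setOf_vertexAt_eq _ _ _)) ((Set.finite_singleton _).prod
    (Path.finite_setOf_vertexAt_eq _ _ _)), Set.ncard_prod, Set.ncard_prod, Pi.add_apply,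
    Path.initialVec_apply, Path.initialVec_apply]
  simp

theorem finite_cutPairs [Finite A] (hQ : Q.IsGentle) (u : V) (i : DOE Q) :
    (Q.cutPairs u i.ctr).Finite := by
  rw [cutPairs_ctr hQ]
  exact ((Set.finite_singleton _).prod (Path.finite_setOf_vertexAt_eq _ _ _)).union
    ((Set.finite_singleton _).prod (Path.finite_setOf_vertexAt_eq _ _ _))

theorem ncard_permittedPaths [Finite A] (hQ : Q.IsGentle) (u : V) (i : DOE Q) :
    ((Q.permittedPaths u i.ctr).ncard : ℤ) = (i.tS.thread.1.initialVec i.tS.idx +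
      i.sS.thread.1.initialVec (i.sS.idx + 1)) u := by
  have hdisj : Disjoint {p ∈ Q.permittedPaths u i.ctr | p.arrows = []}
      (cutPairSegment '' Q.cutPairs u i.ctr) := by
    rw [Set.disjoint_left]
    rintro _ ⟨-, hnil⟩ ⟨y, hy, rfl⟩
    have hlength := length_cutPairSegment y
    have hlt := hy.2.1
    rw [hnil, List.length_nil] at hlength
    lia
  have htrivial : {p ∈ Q.permittedPaths u i.ctr | p.arrows = []}.Finite := by
    refine Set.Subsingleton.finite fun p hp q hq => ?_
    exact Path.eq_of_base_eq_of_arrows_eq (hp.1.2.1.trans hq.1.2.1.symm) (hp.2.trans hq.2.symm)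
  have hcenter : i.sS.thread.1.vertexAt i.sS.idx = i.ctr := i.2.2.symm
  rw [permittedPaths_eq hQ, Set.ncard_union_eq hdisj htrivial ((finite_cutPairs hQ u i).image _),
    (cutPairSegment_injOn hQ u i.ctr).ncard_image, ncard_trivialPaths, Nat.cast_add,
    ncard_cutPairs hQ, Path.initialVec_succ, hcenter]
  simp only [Pi.add_apply, Pi.single_apply, Nat.cast_ite, Nat.cast_one, Nat.cast_zero]
  ring

variable {W : Type} {e : W ≃ PThread Q}

theorem cartan_mulVec_single [Fintype V] [Finite A] (hQ : Q.IsGentle) (i : DOE Q) :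
    cartan Q *ᵥ Pi.single i.ctr 1 =
      i.tS.thread.1.initialVec i.tS.idx + i.sS.thread.1.initialVec (i.sS.idx + 1) := by
  rw [Matrix.mulVec_single_one]
  ext u
  exact ncard_permittedPaths hQ u i

theorem col_dInc (e : W ≃ PThread Q) (w : W) :
    (dInc Q e).col w = (e w).1.initialVec ((e w).1.arrows.length + 1) := by
  ext v
  rw [Path.initialVec_apply]
  refine congrArg _ (Set.ncard_congr (fun (x : PSplit Q) _ => x.idx) ?_ ?_ ?_)
  · rintro ⟨⟨q, k⟩, hk⟩ ⟨hv, rfl : q = e w⟩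
    exact ⟨Nat.lt_succ_of_le hk, hv⟩
  · rintro x y ⟨-, hx⟩ ⟨-, hy⟩ hidx
    exact PSplit.ext (hx.trans hy.symm) hidx
  · rintro k ⟨hk, hv⟩
    exact ⟨⟨(e w, k), Nat.le_of_lt_succ hk⟩, ⟨hv, rfl⟩, rfl⟩

theorem dInc_transpose_mulVec_single [Fintype V] [Finite A] [DecidableEq W] (hQ : Q.IsGentle)
    (i : DOE Q) : (dInc Q e)ᵀ *ᵥ Pi.single i.ctr 1 =
      Pi.single (e.symm i.tvx) 1 + Pi.single (e.symm i.svx) 1 := by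
  rw [Matrix.mulVec_single_one]
  ext w
  have hset : {x : PSplit Q | x.center = i.ctr ∧ x.thread = e w} =
      ↑(({i.tS, i.sS} : Finset (PSplit Q)).filter (·.thread = e w)) := by
    rw [Finset.coe_filter]
    ext x
    simp [center_eq_ctr_iff hQ]
  change (({x : PSplit Q | x.center = i.ctr ∧ x.thread = e w}.ncard : ℕ) : ℤ) = _
  rw [hset, Set.ncard_coe_finset, Finset.card_filter, Finset.sum_pair (show i.tS ≠ i.sS from i.2.1)]
  simp only [Nat.cast_add, Nat.cast_ite, Nat.cast_one, Nat.cast_zero, Pi.add_apply,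
    Pi.single_apply, Equiv.eq_symm_apply, eq_comm]
  rfl

/-- `J` is the matrix whose column at `w` is the incidence vector of the anti-walk with target
`e w`; this anti-walk has source `e (ξ w)` and length `len w`. -/
def IsAntiWalkIncidence (e : W ≃ PThread Q) (J : Matrix V W ℤ) (ξ : Equiv.Perm W) (len : W → ℕ) :
    Prop :=
  ∀ w : W, ∃ l : List (DOE Q), IsAntiDW Q l ∧
    (∀ i, l.head? = some i → DOE.tvx i = e w) ∧
    (∀ i, l.getLast? = some i → DOE.svx i = e (ξ w)) ∧
    l.length = len w ∧
    (∀ v : V, J v w = incVec l v)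

namespace IsAntiWalkIncidence

variable [Fintype V] [Finite A] {J : Matrix V W ℤ} {ξ : Equiv.Perm W} {len : W → ℕ}

theorem cartan_mulVec_col (hQ : Q.IsGentle) (hJ : IsAntiWalkIncidence e J ξ len) (w : W) :
    cartan Q *ᵥ J.col w = -((-1 : ℤ) ^ len w • (dInc Q e).col (ξ w)) := by
  obtain ⟨l, hl, -, hsource, hlen, hcol⟩ := hJ w
  let f (i : DOE Q) : V → ℤ := i.tS.thread.1.initialVec i.tS.idx
  let g (i : DOE Q) : V → ℤ := i.sS.thread.1.initialVec (i.sS.idx + 1)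
  have hchain : l.IsChain fun i j => g i = f j := hl.2.2.1.imp fun i j h => by
    simp only [f, g, h.1, h.2]
  have hfirst : f (l.head hl.1) = 0 := by
    simp only [f, hl.idx_tS_head hQ (List.head?_eq_some_head hl.1), Path.initialVec_zero]
  have hlast : g (l.getLast hl.1) = (dInc Q e).col (ξ w) := by
    have hb := List.getLast?_eq_some_getLast hl.1
    simp only [g, hl.idx_sS_getLast hQ hb, col_dInc, ← hsource _ hb]
    rfl
  rw [show J.col w = incVec l from funext hcol, ← hlen, ← hlast, ← zero_sub, ← hfirst]
  exact map_incVec (Matrix.mulVecLin (cartan Q)).toAddMonoidHom (cartan_mulVec_single hQ) hchain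
    (List.head?_eq_some_head hl.1) (List.getLast?_eq_some_getLast hl.1)

theorem dInc_transpose_mulVec_col [DecidableEq W] (hQ : Q.IsGentle)
    (hJ : IsAntiWalkIncidence e J ξ len) (w : W) :
    (dInc Q e)ᵀ *ᵥ J.col w = Pi.single w 1 - (-1 : ℤ) ^ len w • Pi.single (ξ w) 1 := by
  obtain ⟨l, hl, htarget, hsource, hlen, hcol⟩ := hJ w
  have ha := List.head?_eq_some_head hl.1
  have hb := List.getLast?_eq_some_getLast hl.1
  have hchain : l.IsChain fun i j =>
      (Pi.single (e.symm i.svx) 1 : W → ℤ) = Pi.single (e.symm j.tvx) 1 :=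
    hl.2.1.imp fun i j h => by rw [h]
  rw [show J.col w = incVec l from funext hcol]
  have hsum := map_incVec (Matrix.mulVecLin (dInc Q e)ᵀ).toAddMonoidHom
    (dInc_transpose_mulVec_single hQ) hchain ha hb
  rwa [htarget _ ha, hsource _ hb, hlen, e.symm_apply_apply, e.symm_apply_apply] at hsum

theorem cartan_mul [Fintype W] [DecidableEq W] (hQ : Q.IsGentle)
    (hJ : IsAntiWalkIncidence e J ξ len) :
    cartan Q * J = -(dInc Q e * monomialMatrix ξ fun w => (-1) ^ len w) := by
  ext v w
  have h := congrFun (hJ.cartan_mulVec_col hQ w) v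
  rw [Matrix.neg_apply, mul_monomialMatrix_apply, mul_comm]
  exact h

theorem dInc_transpose_mul [DecidableEq W] (hQ : Q.IsGentle)
    (hJ : IsAntiWalkIncidence e J ξ len) :
    (dInc Q e)ᵀ * J = 1 - monomialMatrix ξ fun w => (-1) ^ len w := by
  ext β w
  refine (congrFun (hJ.dInc_transpose_mulVec_col hQ w) β).trans ?_
  simp [monomialMatrix_apply, Matrix.one_apply, Pi.single_apply]

theorem one_sub_transpose_mul_cartan_mul [Finite W] [DecidableEq W] (hQ : Q.IsGentle)
    (hJ : IsAntiWalkIncidence e J ξ len) :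
    1 - Jᵀ * cartan Q * J = monomialMatrix ξ fun w => (-1) ^ len w := by
  have := Fintype.ofFinite W
  set Φ : Matrix W W ℤ := monomialMatrix ξ fun w => (-1) ^ len w with hΦ
  have horthogonal : Φᵀ * Φ = 1 := by
    simp [hΦ, transpose_monomialMatrix_mul, ← mul_pow]
  calc 1 - Jᵀ * cartan Q * J = 1 + ((dInc Q e)ᵀ * J)ᵀ * Φ := by
        rw [Matrix.mul_assoc, hJ.cartan_mul hQ, Matrix.mul_neg, sub_neg_eq_add,
          Matrix.transpose_mul, Matrix.transpose_transpose, Matrix.mul_assoc]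
    _ = 1 + (1 - Φ)ᵀ * Φ := by rw [hJ.dInc_transpose_mul hQ]
    _ = Φ := by
        rw [Matrix.transpose_sub, Matrix.transpose_one, Matrix.sub_mul, horthogonal,
          Matrix.one_mul, add_sub_cancel]

end IsAntiWalkIncidence

end BQuiv

/-- Let `(Q, I)` be a gentle bound quiver with marked ribbon graph
`(G, ≤) = △(Q, I)` and Cartan matrix `C`; set `n = |Q₀| = |E(G)|` and `m = |V(G)|`.
Let `Ĵ` be the `E(G) × V(G)` integer matrix whose column at a vertex `α` is the
incidence vector of the unique anti-walk `Ǒ_α` with target vertex `α`, let `ξ` be the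
permutation of `V(G)` sending `α` to the source vertex of `Ǒ_α`, and let `ℓ(Ǒ_α)` be
its length.  Then:
(i) `1 - Ĵᵀ C Ĵ` is the signed permutation matrix sending `e_α` to
`(-1)^{ℓ(Ǒ_α)} e_{ξ α}`;
(ii) the characteristic polynomial of `1 - Ĵ Ĵᵀ Cᵀ` equals
`(z - 1)^{n - m} ∏_O (z^{|O|} - ∏_{α ∈ O} (-1)^{ℓ(Ǒ_α)})`, the product running over the
orbits `O` of `ξ` (stated multiplied through by `(z - 1)^m` to avoid a possibly
negative exponent; the orbits are encoded by a set of representatives, one per cycle of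
`ξ`).  This computes the Coxeter polynomial `ψ_A(z)` of the gentle algebra `A = kQ/I`
and yields the formula of Theorem C in terms of the Avella-Alaminos–Geiss invariant. -/
theorem stmt19 {V A : Type} [Fintype V] [Fintype A] [DecidableEq V]
    (Q : BQuiv V A) (hQ : Q.IsGentle)
    (W : Type) [Fintype W] [DecidableEq W] (e : W ≃ PThread Q)
    (J : Matrix V W ℤ) (ξ : Equiv.Perm W) (len : W → ℕ)
    (hJ : ∀ w : W, ∃ l : List (DOE Q), IsAntiDW Q l ∧
      (∀ i, l.head? = some i → DOE.tvx i = e w) ∧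
      (∀ i, l.getLast? = some i → DOE.svx i = e (ξ w)) ∧
      l.length = len w ∧
      (∀ v : V, J v w = incVec l v)) :
    (∀ β α : W, ((1 : Matrix W W ℤ) - Jᵀ * cartan Q * J) β α =
        if β = ξ α then (-1 : ℤ) ^ len α else 0) ∧
    (∀ Rset : Finset W, (∀ a : W, ∃! r, r ∈ Rset ∧ ξ.SameCycle r a) →
      (X - 1) ^ (Fintype.card W) *
          ((1 : Matrix V V ℤ) - J * Jᵀ * (cartan Q)ᵀ).charpoly =
        (X - 1) ^ (Fintype.card V) *
          ∏ r ∈ Rset,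
            ((X : ℤ[X]) ^ (Nat.card {b : W // ξ.SameCycle r b}) -
              C ((-1 : ℤ) ^ (∑ᶠ b ∈ {b : W | ξ.SameCycle r b}, len b)))) := by
  have hΦ := IsAntiWalkIncidence.one_sub_transpose_mul_cartan_mul hQ hJ
  refine ⟨fun β α => by rw [hΦ, monomialMatrix_apply], fun reps hreps => ?_⟩
  have hswap : ((1 : Matrix V V ℤ) - J * Jᵀ * (cartan Q)ᵀ)ᵀ = 1 - cartan Q * J * Jᵀ := by
    simp only [Matrix.transpose_sub, Matrix.transpose_one, Matrix.transpose_mul,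
      Matrix.transpose_transpose, Matrix.mul_assoc]
  calc (X - 1 : ℤ[X]) ^ Fintype.card W * ((1 : Matrix V V ℤ) - J * Jᵀ * (cartan Q)ᵀ).charpoly
      = (X - 1) ^ Fintype.card W * (1 - cartan Q * J * Jᵀ).charpoly := by
        rw [← hswap, Matrix.charpoly_transpose]
    _ = (X - 1) ^ Fintype.card V * (1 - Jᵀ * cartan Q * J).charpoly := by
        rw [charpoly_one_sub_mul_comm, ← Matrix.mul_assoc]
    _ = _ := by
        rw [hΦ, charpoly_monomialMatrix ξ _ reps hreps]
        simp only [finprod_mem_pow_eq_pow_finsum_mem]
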